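/- arXiv:1011.1247 — 2 statements merged into one kernel-verified Lean document; each statement's English description precedes it below -/
import Mathlib

section
/- Let A be a commutative unital C*-algebra and let k ≥ 1. Then every state on M_k(A) is separable, i.e. lies in the weak-* closure of the convex hull of the product states. -/
open scoped ComplexOrder

noncomputable section

/-- The state space of a unital (topological) star algebra `B`: the set of continuous linear
functionals `φ : B → ℂ` (with the weak-* topology on the dual) such that `φ 1 = 1` and
`φ (x* x) ≥ 0` for all `x`. -/
def stateSpace (B : Type*) [Ring B] [StarRing B] [Module ℂ B] [TopologicalSpace B] :
    Set (WeakDual ℂ B) :=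
  {φ | φ 1 = 1 ∧ ∀ x : B, 0 ≤ φ (star x * x)}

/-- Entrywise application of a continuous linear map to a matrix, as a continuous linear map. -/
def matrixMapCLM {k : ℕ} {B C' : Type*} [Ring B] [Module ℂ B] [TopologicalSpace B]
    [Ring C'] [Module ℂ C'] [TopologicalSpace C'] (g : B →L[ℂ] C') :
    Matrix (Fin k) (Fin k) B →L[ℂ] Matrix (Fin k) (Fin k) C' where
  toLinearMap := LinearMap.mapMatrix g.toLinearMap
  cont := by
    show Continuous fun M : Matrix (Fin k) (Fin k) B => M.map g
    exact continuous_pi fun i => continuous_pi fun j =>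
      g.cont.comp ((continuous_apply j).comp (continuous_apply i))

/-- The product state `μ ⊗ ψ` on `M_k(B)`, sending `x` to `μ (x.map ψ)`. -/
def productState {k : ℕ} {B : Type*} [Ring B] [Module ℂ B] [TopologicalSpace B]
    (μ : WeakDual ℂ (Matrix (Fin k) (Fin k) ℂ)) (ψ : WeakDual ℂ B) :
    WeakDual ℂ (Matrix (Fin k) (Fin k) B) :=
  (μ : Matrix (Fin k) (Fin k) ℂ →L[ℂ] ℂ).comp (matrixMapCLM (ψ : B →L[ℂ] ℂ))

/-- A state on `M_k(B)` is separable if it lies in the weak-* closure of the convex hull of the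
product states `μ ⊗ ψ` (with `μ` a state on `M_k(ℂ)` and `ψ` a state on `B`), and entangled
otherwise. -/
def IsSeparableState {k : ℕ} {B : Type*} [Ring B] [StarRing B] [Module ℂ B] [TopologicalSpace B]
    (φ : WeakDual ℂ (Matrix (Fin k) (Fin k) B)) : Prop :=
  φ ∈ closure (convexHull ℝ
    {χ : WeakDual ℂ (Matrix (Fin k) (Fin k) B) |
      ∃ μ ∈ stateSpace (Matrix (Fin k) (Fin k) ℂ), ∃ ψ ∈ stateSpace B, χ = productState μ ψ})

lemma aux_nonneg {D : Type*} [CStarAlgebra D] (a : D) (ha : star a = a)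
    (h : ∀ x ∈ spectrum ℂ a, 0 ≤ x) : ∃ y, a = star y * y := by
  let _ := CStarAlgebra.spectralOrder D
  have := CStarAlgebra.spectralOrderedRing D
  have hs : IsSelfAdjoint a := ha
  have key := (StarOrderedRing.nonneg_iff_spectrum_nonneg (R := ℂ) a hs.isStarNormal).2 h
  exact CStarAlgebra.nonneg_iff_eq_star_mul_self.mp key

lemma exists_star_mul_self_of_pointwise {A : Type*} [CommCStarAlgebra A] {k : ℕ}
    (M : Matrix (Fin k) (Fin k) A) (hM : star M = M)
    (h : ∀ (p : WeakDual.characterSpace ℂ A) (v : Fin k → ℂ) (c : ℂ), v ≠ 0 →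
      (M.map p).mulVec v = c • v → 0 ≤ c) : ∃ y : Matrix (Fin k) (Fin k) A, M = star y * y := by
  let _ := CStarAlgebra.spectralOrder A
  have := CStarAlgebra.spectralOrderedRing A
  refine aux_nonneg (D := CStarMatrix (Fin k) (Fin k) A) (CStarMatrix.ofMatrix M) hM ?_
  intro c hc
  have h1 : ¬ IsUnit ((algebraMap ℂ (Matrix (Fin k) (Fin k) A) c) - M) := hc
  rw [Matrix.isUnit_iff_isUnit_det] at h1
  obtain ⟨p, hp⟩ := WeakDual.CharacterSpace.exists_apply_eq_zero h1
  have h2 := RingHom.map_det (RingHomClass.toRingHom p : A →+* ℂ)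
        ((algebraMap ℂ (Matrix (Fin k) (Fin k) A) c) - M)
  have h3 := h2.symm.trans hp
  obtain ⟨v, hv, hv2⟩ := Matrix.exists_mulVec_eq_zero_iff.mpr h3
  refine h p v c hv ?_
  have h4 : (RingHomClass.toRingHom p : A →+* ℂ).mapMatrix ((algebraMap ℂ (Matrix (Fin k) (Fin k) A) c) - M) = c • (1 : Matrix (Fin k) (Fin k) ℂ) - M.map p := by
    ext i j
    by_cases hij : i = j <;> simp [hij, Algebra.algebraMap_eq_smul_one]
  rw [h4, Matrix.sub_mulVec, sub_eq_zero, Matrix.smul_mulVec, Matrix.one_mulVec] at hv2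
  exact hv2.symm

lemma sepE {E : Type*} [AddCommGroup E] [Module ℂ E] [TopologicalSpace E] [IsTopologicalAddGroup E]
    [ContinuousSMul ℂ E] [LocallyConvexSpace ℝ E] (S : Set E) (φ : E)
    (h : φ ∉ closure (convexHull ℝ S)) :
    ∃ (f : E →L[ℂ] ℂ) (r : ℝ), (∀ χ ∈ S, (f χ).re < r) ∧ r < (f φ).re := by
  have : ContinuousSMul ℝ E := IsScalarTower.continuousSMul (M := ℝ) (α := E) ℂ
  obtain ⟨f, r, h1, h2⟩ := RCLike.geometric_hahn_banach_closed_point (𝕜 := ℂ)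
    (convex_convexHull ℝ S).closure isClosed_closure h
  exact ⟨f, r, fun χ hχ => h1 χ (subset_closure (subset_convexHull _ _ hχ)), h2⟩

lemma sepB {E F : Type*} [AddCommGroup E] [Module ℂ E] [AddCommGroup F] [Module ℂ F] 
    (B : E →ₗ[ℂ] F →ₗ[ℂ] ℂ) (S : Set (WeakBilin B)) (φ : WeakBilin B)
    (h : φ ∉ closure (convexHull ℝ S)) :
    ∃ (x : F) (r : ℝ), (∀ χ ∈ S, (B χ x).re < r) ∧ r < (B φ x).re := by
  have : LocallyConvexSpace ℝ (WeakBilin B) := WeakBilin.locallyConvexSpace (B := B)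
  obtain ⟨f, r, h1, h2⟩ := @sepE (WeakBilin B) _ _ _ _
    (WeakBilin.instContinuousSMul (B := B)) this S φ h
  obtain ⟨x, hx⟩ := LinearMap.dualEmbedding_surjective B f
  have h3 : ∀ χ : WeakBilin B, f χ = B χ x := by
    intro χ; rw [← hx]; rfl
  refine ⟨x, r, fun χ hχ => ?_, ?_⟩
  · have := h1 χ hχ
    rwa [h3] at this
  · rwa [h3] at h2

lemma sep {B : Type*} [Ring B] [Module ℂ B] [TopologicalSpace B] (S : Set (WeakDual ℂ B)) (φ : WeakDual ℂ B)
   (h : φ ∉ closure (convexHull ℝ S)) : ∃ (x : B) (r : ℝ), (∀ χ ∈ S, (χ x).re < r) ∧ r < (φ x).re := by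
  exact sepB (topDualPairing ℂ B) S φ h

/-- Vector functional on complex matrices. -/
def vecF {k : ℕ} (v : Fin k → ℂ) : WeakDual ℂ (Matrix (Fin k) (Fin k) ℂ) :=
  LinearMap.toContinuousLinearMap
    { toFun := fun M => star v ⬝ᵥ (M.mulVec v)
      map_add' := fun M N => by rw [Matrix.add_mulVec, dotProduct_add]
      map_smul' := fun c M => by rw [Matrix.smul_mulVec, dotProduct_smul]; rfl }

lemma vecF_apply {k : ℕ} (v : Fin k → ℂ) (M : Matrix (Fin k) (Fin k) ℂ) :
    vecF v M = star v ⬝ᵥ (M.mulVec v) := rfl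

lemma vecF_mem {k : ℕ} (v : Fin k → ℂ) (hv : star v ⬝ᵥ v = 1) :
    vecF v ∈ stateSpace (Matrix (Fin k) (Fin k) ℂ) := by
  refine ⟨by rw [vecF_apply, Matrix.one_mulVec, hv], fun x => ?_⟩
  rw [vecF_apply, ← Matrix.mulVec_mulVec, Matrix.dotProduct_mulVec, Matrix.star_eq_conjTranspose,
    Matrix.vecMul_conjTranspose, star_star]
  exact dotProduct_star_self_nonneg _

lemma char_mem {A : Type*} [CommCStarAlgebra A] (p : WeakDual.characterSpace ℂ A) :
    (p : WeakDual ℂ A) ∈ stateSpace A := by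
  refine ⟨map_one p, fun x => ?_⟩
  have : p (star x * x) = star (p x) * p x := by rw [map_mul, map_star]
  exact this ▸ star_mul_self_nonneg _

lemma productState_vecF_apply {A : Type*} [CommCStarAlgebra A] {k : ℕ} (p : WeakDual.characterSpace ℂ A)
    (v : Fin k → ℂ) (x : Matrix (Fin k) (Fin k) A) :
    productState (vecF v) (p : WeakDual ℂ A) x = star v ⬝ᵥ ((x.map p).mulVec v) := rfl

lemma vec_star {k : ℕ} (v : Fin k → ℂ) (M : Matrix (Fin k) (Fin k) ℂ) :
    star v ⬝ᵥ ((star M).mulVec v) = star (star v ⬝ᵥ (M.mulVec v)) := by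
  rw [Matrix.dotProduct_mulVec, Matrix.star_eq_conjTranspose, Matrix.vecMul_conjTranspose,
    star_star, ← Matrix.star_dotProduct_star, star_star, dotProduct_comm]

lemma exists_normalize {k : ℕ} (v : Fin k → ℂ) (hv : v ≠ 0) :
    ∃ a : ℂ, star (a • v) ⬝ᵥ (a • v) = 1 := by
  have h : 0 < star v ⬝ᵥ v := Matrix.dotProduct_star_self_pos_iff.2 hv
  obtain ⟨t, ht⟩ : ∃ t : ℝ, (t : ℂ) = star v ⬝ᵥ v := ⟨_, (Complex.eq_re_of_ofReal_le h.le).symm⟩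
  rw [← ht] at h
  have h0 : 0 < t := by exact_mod_cast h
  refine ⟨((Real.sqrt t)⁻¹ : ℝ), ?_⟩
  rw [star_smul, smul_dotProduct, dotProduct_smul, ← ht]
  simp only [smul_eq_mul, Complex.star_def, Complex.conj_ofReal]
  norm_cast
  rw [← mul_assoc, ← mul_inv, Real.mul_self_sqrt h0.le, inv_mul_cancel₀ h0.ne']

/-- If `A` is a commutative unital C*-algebra and `k ≥ 1`, then every state on `M_k(A)` is
separable. -/
theorem all_states_separable_of_comm
    {A : Type*} [CommCStarAlgebra A] (k : ℕ) (hk : 1 ≤ k) :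
    ∀ φ ∈ stateSpace (Matrix (Fin k) (Fin k) A), IsSeparableState φ := by
  intro φ hφ
  by_contra hsep
  obtain ⟨x, r, h1, h2⟩ := sep _ φ hsep
  have hx : ∀ (p : WeakDual.characterSpace ℂ A) (v : Fin k → ℂ), star v ⬝ᵥ v = 1 →
      (star v ⬝ᵥ ((x.map p).mulVec v)).re < r := by
    intro p v hv
    have := h1 _ ⟨vecF v, vecF_mem v hv, p, char_mem p, rfl⟩
    rwa [productState_vecF_apply] at this
  have key : ∃ y : Matrix (Fin k) (Fin k) A,
      ((2 * r : ℝ) : ℂ) • (1 : Matrix (Fin k) (Fin k) A) - (x + star x) = star y * y := by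
    apply exists_star_mul_self_of_pointwise
    · rw [star_sub, star_add, star_star, star_smul, star_one, Complex.star_def,
        Complex.conj_ofReal, add_comm x]
    · intro p v c hv hc
      obtain ⟨a, ha⟩ := exists_normalize v hv
      have hc' := congrArg (fun w => star (a • v) ⬝ᵥ (a • w)) hc
      simp only [smul_comm a c, ← Matrix.mulVec_smul] at hc'
      have hm : (((2 * r : ℝ) : ℂ) • (1 : Matrix (Fin k) (Fin k) A) - (x + star x)).map p
          = ((2 * r : ℝ) : ℂ) • (1 : Matrix (Fin k) (Fin k) ℂ) - (x.map p + star (x.map p)) := by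
        ext i j
        by_cases hij : i = j <;>
          simp [hij, Matrix.star_apply, map_star]
      have hlt := hx p (a • v) ha
      rw [hm] at hc'
      generalize a • v = w at hc' hlt ha
      rw [Matrix.sub_mulVec, Matrix.add_mulVec, dotProduct_sub, dotProduct_add, vec_star,
        Matrix.smul_mulVec, Matrix.one_mulVec, dotProduct_smul, dotProduct_smul, ha] at hc'
      generalize star w ⬝ᵥ ((x.map p).mulVec w) = z at hc' hlt
      simp only [smul_eq_mul, mul_one] at hc'
      rw [← hc', Complex.le_def]
      simp
      linarith
  obtain ⟨y, hy⟩ := key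
  obtain ⟨hφ1, hφ2⟩ := hφ
  have hstar : (φ (star x)).re = (φ x).re := by
    have h5 := hφ2 (x + Complex.I • 1)
    have h6 := hφ2 x
    have e : star (x + Complex.I • 1) * (x + Complex.I • 1)
        = star x * x + Complex.I • star x - Complex.I • x + 1 := by
      simp [add_mul, mul_add, smul_smul]
      abel
    rw [e, map_add, map_sub, map_add, map_smul, map_smul, hφ1] at h5
    have h7 := (Complex.le_def.1 h5).2
    have h8 := (Complex.le_def.1 h6).2
    simp at h7 h8
    linarith
  have h3 := hφ2 y
  rw [← hy, map_sub, map_add, map_smul, hφ1] at h3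
  have h4 := (Complex.le_def.1 h3).1
  simp [hstar] at h4
  linarith


end
end

section
/- Let A be a unital C*-algebra that is NOT commutative. Then there exist a state α on M₂(A) and a state β on M₂(M₂(ℂ)) which are compatible — meaning α(m.map (algebraMap ℂ A)) = β(m ⊗ 1) for every m ∈ M₂(ℂ), where m ⊗ 1 ∈ M₂(M₂(ℂ)) is the block matrix whose (i,j) block is m_{ij} times the 2×2 identity matrix — but for which there exists NO state γ on M₂(M₂(A)) satisfying both: (a) γ(ι(x)) = α(x) for every x ∈ M₂(A), where ι(x) ∈ M₂(M₂(A)) is the block matrix whose (i,j) inner block is x_{ij} times the 2×2 identity matrix over A; and (b) γ(M.map' (algebraMap ℂ A)) = β(M) for every M ∈ M₂(M₂(ℂ)), where M.map' applies algebraMap ℂ A to every innermost complex entry of M. -/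
open scoped ComplexOrder

noncomputable section

open Matrix in
lemma no_joint {A : Type*} [CStarAlgebra A] (ψ₁ ψ₂ : A →L[ℂ] ℂ) (a : A) (ha : star a = a)
    (hne : ψ₁ a ≠ ψ₂ a)
    (γ : WeakDual ℂ (Matrix (Fin 2) (Fin 2) (Matrix (Fin 2) (Fin 2) A)))
    (hγ : ∀ x, 0 ≤ γ (star x * x))
    (h1 : ∀ x : Matrix (Fin 2) (Fin 2) A,
              γ (x.map fun a => a • (1 : Matrix (Fin 2) (Fin 2) A)) = (ψ₁ (x 0 0) + ψ₂ (x 1 1)) / 2)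
    (h2 : ∀ M : Matrix (Fin 2) (Fin 2) (Matrix (Fin 2) (Fin 2) ℂ),
              γ (M.map fun N => N.map (algebraMap ℂ A)) = (∑ i, ∑ j, (M i j) i j) / 2) : False := by
  set V : Matrix (Fin 2) (Fin 2) (Matrix (Fin 2) (Fin 2) A) :=
    !![0, !![0,1;1,0]; !![0,1;1,0], 0] with hV
  set X : Matrix (Fin 2) (Fin 2) (Matrix (Fin 2) (Fin 2) A) :=
    !![!![a,0;0,a], 0; 0, !![-a,0;0,-a]] with hX
  have hVs : star V = V := by
    ext i j k l; fin_cases i <;> fin_cases j <;> fin_cases k <;> fin_cases l <;> simp [hV, star_apply]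
  have hXs : star X = X := by
    ext i j k l; fin_cases i <;> fin_cases j <;> fin_cases k <;> fin_cases l <;> simp [hX, star_apply, ha]
  have hVV : V * V = 1 := by
    ext i j k l; fin_cases i <;> fin_cases j <;> fin_cases k <;> fin_cases l <;>
      simp [hV, mul_apply, one_apply]
  have hVX : V * X = - (X * V) := by
    ext i j k l; fin_cases i <;> fin_cases j <;> fin_cases k <;> fin_cases l <;>
      simp [hV, hX, mul_apply]
  have gX : γ X = (ψ₁ a - ψ₂ a) / 2 := by
    have := h1 !![a, 0; 0, -a]
    simp only [of_apply, cons_val', cons_val_zero, cons_val_one, cons_val_fin_one, map_neg,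
      ← sub_eq_add_neg] at this
    rw [← this]; congr 1
    ext i j k l; fin_cases i <;> fin_cases j <;> fin_cases k <;> fin_cases l <;> simp [hX, one_apply]
  have gV : γ V = 1 := by
    have := h2 !![0, !![0,1;1,0]; !![0,1;1,0], 0]
    have e : (∑ i, ∑ j, ((!![0, !![0,1;1,0]; !![0,1;1,0], 0] :
      Matrix (Fin 2) (Fin 2) (Matrix (Fin 2) (Fin 2) ℂ)) i j) i j) / 2 = 1 := by
      simp
    rw [e] at this
    rw [← this]; congr 1
    ext i j k l; fin_cases i <;> fin_cases j <;> fin_cases k <;> fin_cases l <;> simp [hV]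
  have g1 : γ 1 = 1 := by
    have := h2 1
    have e : (∑ i, ∑ j, ((1 :
      Matrix (Fin 2) (Fin 2) (Matrix (Fin 2) (Fin 2) ℂ)) i j) i j) / 2 = 1 := by
      simp
    rw [e] at this
    rw [← this]; congr 1
    ext i j k l; fin_cases i <;> fin_cases j <;> fin_cases k <;> fin_cases l <;> simp [one_apply]
  have key : ∀ t : ℝ, 0 ≤ γ (X * X) - 2 * (t : ℂ) * γ X := by
    intro t
    have := hγ ((t : ℂ) • (V - 1) + X)
    have e : star ((t : ℂ) • (V - 1) + X) * ((t : ℂ) • (V - 1) + X)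
      = ((t : ℂ) * t * 2) • (1 - V) + (X * X - (2 * (t : ℂ)) • X) := by
      have : star ((t : ℂ) • (V - 1) + X) = (t : ℂ) • (V - 1) + X := by
        simp [star_add, star_smul, hVs, hXs]
      rw [this]
      simp only [add_mul, mul_add, smul_mul_assoc, mul_smul_comm, sub_mul, mul_sub, hVV, hVX,
        one_mul, mul_one]
      module
    rw [e] at this
    simpa [gV, g1] using this
  have h0 := key 0
  have hp := key 1
  have hre : (γ X).im = 0 := by
    have := (Complex.le_def.1 h0).2
    have := (Complex.le_def.1 hp).2
    simp at *; linarith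
  have hXre : (γ X).re = 0 := by
    by_contra hc
    have key' : ∀ t : ℝ, 2 * t * (γ X).re ≤ (γ (X * X)).re := by
      intro t
      have := (Complex.le_def.1 (key t)).1
      simpa [hre] using this
    have h := key' (((γ (X*X)).re + 1) / (2 * (γ X).re))
    have e : 2 * (((γ (X*X)).re + 1) / (2 * (γ X).re)) * (γ X).re = (γ (X*X)).re + 1 := by
      field_simp
    linarith
  have : γ X = 0 := Complex.ext hXre hre
  rw [gX] at this
  apply hne
  linear_combination 2 * this

lemma pos_of_norm_le {A : Type*} [CStarAlgebra A] (f : A →L[ℂ] ℂ) (hf : ‖f‖ ≤ 1) (h1 : f 1 = 1)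
    (x : A) : 0 ≤ f (star x * x) := by
  letI := CStarAlgebra.spectralOrder A
  haveI := CStarAlgebra.spectralOrderedRing A
  have hle : ∀ y, ‖f y‖ ≤ ‖y‖ := fun y => by
    simpa using f.le_of_opNorm_le hf y
  -- selfadjoint elements have real values
  have hreal : ∀ b : A, IsSelfAdjoint b → (f b).im = 0 := by
    intro b hb
    have key : ∀ t : ℝ, ((f b).im + t) ^ 2 ≤ ‖b‖ ^ 2 + t ^ 2 := by
      intro t
      have e1 : ‖f (b + (Complex.I * t) • 1)‖ ^ 2 ≤ ‖b + (Complex.I * t) • (1 : A)‖ ^ 2 := by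
        gcongr; exact hle _
      have e2 : ‖b + (Complex.I * t) • (1 : A)‖ ^ 2 ≤ ‖b‖ ^ 2 + t ^ 2 := by
        rw [sq, ← CStarRing.norm_star_mul_self]
        have : star (b + (Complex.I * t) • (1 : A)) * (b + (Complex.I * t) • (1 : A))
            = b * b + ((t : ℂ) ^ 2) • 1 := by
          rw [star_add, hb.star_eq, star_smul, star_one]
          simp only [add_mul, mul_add, smul_mul_assoc, mul_smul_comm, one_mul, mul_one, smul_smul]
          simp only [star_mul', Complex.star_def, Complex.conj_I, Complex.conj_ofReal]
          have : (Complex.I * t) * (-Complex.I * t) = (t : ℂ) ^ 2 := by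
            linear_combination (-(t : ℂ) ^ 2) * Complex.I_sq
          rw [smul_add, smul_smul, this]; module
        rw [this]
        refine (norm_add_le _ _).trans ?_
        have n1 : ‖b * b‖ ≤ ‖b‖ ^ 2 := by rw [sq]; exact norm_mul_le _ _
        have n2 : ‖((t : ℂ) ^ 2) • (1 : A)‖ ≤ t ^ 2 := by
          rw [norm_smul]
          have : ‖(1 : A)‖ ≤ 1 := by
            rcases subsingleton_or_nontrivial A with h | h
            · simp [Subsingleton.elim (1 : A) 0]
            · simp
          simpa using mul_le_mul_of_nonneg_left this (sq_nonneg t)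
        linarith
      have e3 : ((f b).im + t) ^ 2 ≤ ‖f (b + (Complex.I * t) • 1)‖ ^ 2 := by
        rw [map_add, map_smul, h1, Complex.sq_norm, Complex.normSq_apply]
        simp
        nlinarith [mul_self_nonneg (f b).re]
      linarith
    by_contra hc
    have := key ((‖b‖ ^ 2 + 1) / (2 * (f b).im))
    have e : ((f b).im + (‖b‖ ^ 2 + 1) / (2 * (f b).im)) ^ 2
      = (f b).im ^ 2 + (‖b‖ ^ 2 + 1) + ((‖b‖ ^ 2 + 1) / (2 * (f b).im)) ^ 2 := by
      field_simp; ring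
    rw [e] at this
    nlinarith [sq_nonneg (f b).im]
  have hb : IsSelfAdjoint (star x * x) := IsSelfAdjoint.star_mul_self x
  set b := star x * x with hbdef
  have hb0 : 0 ≤ b := star_mul_self_nonneg x
  rw [Complex.le_def]
  refine ⟨?_, by simp [hreal b hb]⟩
  simp only [Complex.zero_re]
  have hbn : b ≤ algebraMap ℝ A ‖b‖ := hb.le_algebraMap_norm_self
  have hn : ‖algebraMap ℝ A ‖b‖ - b‖ ≤ ‖b‖ := by
    rw [CStarAlgebra.norm_le_iff_le_algebraMap _ (norm_nonneg b) (sub_nonneg.2 hbn)]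
    simpa using hb0
  have h3 := (hle (algebraMap ℝ A ‖b‖ - b)).trans hn
  have h4 : f (algebraMap ℝ A ‖b‖) = (‖b‖ : ℂ) := by
    have : algebraMap ℝ A ‖b‖ = (‖b‖ : ℂ) • (1 : A) := by
      rw [Algebra.algebraMap_eq_smul_one]; simp
    rw [this, map_smul, h1]; simp
  rw [map_sub, h4] at h3
  have h5 := (Complex.re_le_norm _).trans h3
  simp at h5
  linarith

lemma exists_sa {A : Type*} [CStarAlgebra A] (hnc : ∃ a b : A, a * b ≠ b * a) :
    ∃ a : A, IsSelfAdjoint a ∧ ∀ c : ℂ, a ≠ algebraMap ℂ A c := by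
  by_contra! h
  obtain ⟨a, b, hab⟩ := hnc
  apply hab
  obtain ⟨c, hc⟩ := h (realPart a) (realPart a).2
  obtain ⟨d, hd⟩ := h (imaginaryPart a) (imaginaryPart a).2
  rw [← realPart_add_I_smul_imaginaryPart a, hc, hd, Algebra.smul_def, ← map_mul, ← map_add]
  exact Algebra.commutes _ _

lemma exists_states {A : Type*} [CStarAlgebra A] (hnc : ∃ a b : A, a * b ≠ b * a) :
    ∃ (a : A) (f g : A →L[ℂ] ℂ), star a = a ∧ f a ≠ g a ∧ f 1 = 1 ∧ g 1 = 1 ∧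
      (∀ x, 0 ≤ f (star x * x)) ∧ (∀ x, 0 ≤ g (star x * x)) := by
  obtain ⟨a, ha, hns⟩ := exists_sa hnc
  haveI : Nontrivial A := by
    obtain ⟨x, y, h⟩ := hnc
    exact ⟨_, _, h⟩
  haveI : IsStarNormal a := ha.isStarNormal
  let B := StarAlgebra.elemental ℂ a
  let a' : B := ⟨a, StarAlgebra.elemental.self_mem ℂ a⟩
  have ext : ∀ φ : WeakDual.characterSpace ℂ B, ∃ f : A →L[ℂ] ℂ, f a = φ a' ∧ f 1 = 1 ∧
      (∀ x, 0 ≤ f (star x * x)) := by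
    intro φ
    obtain ⟨f, hf, hn⟩ := exists_extension_norm_eq (𝕜 := ℂ)
      (Subalgebra.toSubmodule B.toSubalgebra) (WeakDual.toStrongDual (φ : WeakDual ℂ B))
    have h1 : f 1 = 1 := (hf (1 : B)).trans (map_one φ)
    refine ⟨f, hf a', h1, pos_of_norm_le f ?_ h1⟩
    rw [hn]
    exact (WeakDual.CharacterSpace.norm_le_norm_one φ).trans (by simp)
  have : ∃ φ χ : WeakDual.characterSpace ℂ B, φ a' ≠ χ a' := by
    by_contra! h
    obtain ⟨φ⟩ : Nonempty (WeakDual.characterSpace ℂ B) := inferInstance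
    apply hns (φ a')
    have : a' = algebraMap ℂ B (φ a') := by
      apply (gelfandTransform_isometry B).injective
      ext χ
      simp [h χ φ]
    exact congrArg Subtype.val this
  obtain ⟨φ, χ, h⟩ := this
  obtain ⟨f, hf, hf1, hfp⟩ := ext φ
  obtain ⟨g, hg, hg1, hgp⟩ := ext χ
  exact ⟨a, f, g, ha, by rw [hf, hg]; exact h, hf1, hg1, hfp, hgp⟩

/-- the state `½ (e₀₀ ⊗ f + e₁₁ ⊗ g)` -/
def alphaSt {A : Type*} [CStarAlgebra A] (f g : A →L[ℂ] ℂ) : WeakDual ℂ (Matrix (Fin 2) (Fin 2) A) :=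
  ({ toFun := fun x => (f (x 0 0) + g (x 1 1)) / 2
     map_add' := fun x y => by simp; ring
     map_smul' := fun c x => by simp; ring
     cont := by
      have h : ∀ i j, Continuous fun x : Matrix (Fin 2) (Fin 2) A => x i j :=
        fun i j => (continuous_apply j).comp (continuous_apply i)
      exact ((f.continuous.comp (h 0 0)).add (g.continuous.comp (h 1 1))).div_const 2 } :
    Matrix (Fin 2) (Fin 2) A →L[ℂ] ℂ)

/-- the maximally entangled state -/
def betaSt : WeakDual ℂ (Matrix (Fin 2) (Fin 2) (Matrix (Fin 2) (Fin 2) ℂ)) :=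
  ({ toFun := fun M => (∑ i, ∑ j, (M i j) i j) / 2
     map_add' := fun x y => by simp; ring
     map_smul' := fun c x => by simp; ring
     cont := by
      have h : ∀ i j k l, Continuous fun x : Matrix (Fin 2) (Fin 2) (Matrix (Fin 2) (Fin 2) ℂ) =>
          x i j k l :=
        fun i j k l => (continuous_apply l).comp ((continuous_apply k).comp
          ((continuous_apply j).comp (continuous_apply i)))
      exact (continuous_finsetSum _ fun i _ => continuous_finsetSum _ fun j _ =>
        h i j i j).div_const 2 } :
    Matrix (Fin 2) (Fin 2) (Matrix (Fin 2) (Fin 2) ℂ) →L[ℂ] ℂ)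

lemma alphaSt_apply {A : Type*} [CStarAlgebra A] (f g : A →L[ℂ] ℂ) (x : Matrix (Fin 2) (Fin 2) A) :
    alphaSt f g x = (f (x 0 0) + g (x 1 1)) / 2 := rfl

lemma betaSt_apply (M) : betaSt M = (∑ i, ∑ j, (M i j) i j) / 2 := rfl

lemma half_nonneg {z : ℂ} (h : 0 ≤ z) : 0 ≤ z / 2 := by
  rw [Complex.le_def] at *
  obtain ⟨h1, h2⟩ := h
  simp at *
  constructor
  · linarith
  · rw [← h2]; simp

lemma alphaSt_mem {A : Type*} [CStarAlgebra A] (f g : A →L[ℂ] ℂ) (hf1 : f 1 = 1) (hg1 : g 1 = 1)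
    (hf : ∀ x, 0 ≤ f (star x * x)) (hg : ∀ x, 0 ≤ g (star x * x)) :
    alphaSt f g ∈ stateSpace (Matrix (Fin 2) (Fin 2) A) := by
  refine ⟨by simp [alphaSt_apply, hf1, hg1], fun x => ?_⟩
  rw [alphaSt_apply]
  apply half_nonneg
  simp only [Matrix.mul_apply, Matrix.star_apply, map_sum]
  exact add_nonneg (Finset.sum_nonneg fun i _ => hf _) (Finset.sum_nonneg fun i _ => hg _)

lemma betaSt_mem : betaSt ∈ stateSpace (Matrix (Fin 2) (Fin 2) (Matrix (Fin 2) (Fin 2) ℂ)) := by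
  refine ⟨by simp [betaSt_apply], fun x => ?_⟩
  rw [betaSt_apply]
  apply half_nonneg
  have : (∑ i, ∑ j, ((star x * x) i j) i j)
      = ∑ k, ∑ l, star (∑ i, x k i l i) * (∑ i, x k i l i) := by
    simp [Matrix.mul_apply, Matrix.star_apply, Fin.sum_univ_two]
    ring
  rw [this]
  exact Finset.sum_nonneg fun k _ => Finset.sum_nonneg fun l _ => star_mul_self_nonneg _

/-- If `A` is a noncommutative unital C*-algebra, then there are a state `α` on `M₂(A)` and a
state `β` on `M₂(M₂(ℂ))` which are compatible (they have the same marginal on the outer ancilla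
copy of `M₂(ℂ)`), but which admit no joint state `γ` on `M₂(M₂(A))` restricting to `α` on the
`M₂(ℂ) ⊗ A` factor and to `β` on the `M₂(ℂ) ⊗ M₂(ℂ)` factor. -/
theorem exists_compatible_not_jointly_extendable
    {A : Type*} [CStarAlgebra A] (hnc : ∃ a b : A, a * b ≠ b * a) :
    ∃ α ∈ stateSpace (Matrix (Fin 2) (Fin 2) A),
      ∃ β ∈ stateSpace (Matrix (Fin 2) (Fin 2) (Matrix (Fin 2) (Fin 2) ℂ)),
        (∀ m : Matrix (Fin 2) (Fin 2) ℂ,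
          α (m.map (algebraMap ℂ A)) =
            β (m.map fun c => c • (1 : Matrix (Fin 2) (Fin 2) ℂ))) ∧
        ¬ ∃ γ ∈ stateSpace (Matrix (Fin 2) (Fin 2) (Matrix (Fin 2) (Fin 2) A)),
            (∀ x : Matrix (Fin 2) (Fin 2) A,
              γ (x.map fun a => a • (1 : Matrix (Fin 2) (Fin 2) A)) = α x) ∧
            (∀ M : Matrix (Fin 2) (Fin 2) (Matrix (Fin 2) (Fin 2) ℂ),
              γ (M.map fun N => N.map (algebraMap ℂ A)) = β M) := by
  obtain ⟨a, f, g, ha, hne, hf1, hg1, hf, hg⟩ := exists_states hnc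
  refine ⟨alphaSt f g, alphaSt_mem f g hf1 hg1 hf hg, betaSt, betaSt_mem, ?_, ?_⟩
  · intro m
    simp [alphaSt_apply, betaSt_apply, Algebra.algebraMap_eq_smul_one, hf1, hg1]
  · rintro ⟨γ, hγ, h1, h2⟩
    exact no_joint f g a ha hne γ hγ.2 (fun x => h1 x) (fun M => h2 M)

end
end
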